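/- Work in ℝ⁵ with the D₅ data below, and let ρ = ω₁+ω₂+ω₃+ω₄+ω₅ = (4,3,2,1,0). For all nonnegative integers a, b and every integer c ≥ 1: the reflection of the vector aω₁ + bω₂ + cω₃ − 2ω₄ + ρ in the root α₄ = e₄ − e₅ equals aω₁ + bω₂ + (c−1)ω₃ + ρ, and moreover ⟨aω₁ + bω₂ + (c−1)ω₃ + ρ, α⟩ > 0 for every positive root α of D₅. (By the Borel–Bott–Weil theorem, this computes the cohomology of the bundle of weight aω₁+bω₂+cω₃−2ω₄ on the spinor tenfold: it is the irreducible representation of highest weight aω₁+bω₂+(c−1)ω₃, concentrated in degree 1.) -/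

import Mathlib

noncomputable section

open Finset

/-- The standard dot product on `ℝ⁵`. -/
def dot5 (v w : Fin 5 → ℝ) : ℝ := ∑ i, v i * w i

/-- The standard orthonormal basis vectors `e₁,…,e₅` of `ℝ⁵` (zero-indexed). -/
def e5 (i : Fin 5) : Fin 5 → ℝ := Pi.single i 1

/-- The fundamental weights of `D₅`. -/
def ωD (k : Fin 5) : Fin 5 → ℝ :=
  match k with
  | 0 => e5 0
  | 1 => e5 0 + e5 1
  | 2 => e5 0 + e5 1 + e5 2
  | 3 => (1/2 : ℝ) • (e5 0 + e5 1 + e5 2 + e5 3 - e5 4)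
  | 4 => (1/2 : ℝ) • (e5 0 + e5 1 + e5 2 + e5 3 + e5 4)

/-- Reflection in the (nonzero) vector `α`. -/
def refl5 (α v : Fin 5 → ℝ) : Fin 5 → ℝ := v - (2 * dot5 v α / dot5 α α) • α

/-- The positive roots of `D₅`: `eᵢ − eⱼ` and `eᵢ + eⱼ` for `i < j`. -/
def posRootsD5 : Set (Fin 5 → ℝ) :=
  {α | ∃ i j : Fin 5, i < j ∧ (α = e5 i - e5 j ∨ α = e5 i + e5 j)}

/-- The half sum of positive roots / sum of fundamental weights of `D₅`. -/
def ρD : Fin 5 → ℝ := ωD 0 + ωD 1 + ωD 2 + ωD 3 + ωD 4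

end

/-!
The fundamental weights `ω` are dual to the simple roots `α`, so `⟨∑ mₖ ωₖ, αⱼ⟩ = mⱼ` and the
rows of the Cartan matrix express the simple roots in the basis `ω`. Since every root has square
length `2`, the reflection in `αₖ` subtracts `mₖ` times the `k`-th row of the Cartan matrix from
the coordinates `m`; for `k = 4` it takes `(a + 1, b + 1, c + 1, -1, 1)` to
`(a + 1, b + 1, c, 1, 1)`. The new coordinates are positive, and a vector `v` pairing positively
with the simple roots pairs positively with all positive roots: its entries decrease strictly,
whence `vᵢ - vⱼ > 0` and `vᵢ + vⱼ ≥ v₄ + v₅ > 0` for `i < j`.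
-/

/-- The simple roots `α₁,…,α₅` of `D₅` in Bourbaki's order, with `α₁` at index `0`. This is the
order dual to `ωD` and the one of the rows of `CartanMatrix.D 5`. -/
noncomputable def simpleRootD5 : Fin 5 → Fin 5 → ℝ :=
  ![e5 0 - e5 1, e5 1 - e5 2, e5 2 - e5 3, e5 3 - e5 4, e5 3 + e5 4]

/-- The weight with coordinates `m` in the basis of fundamental weights, in which reflections in
simple roots and regular dominance are read off directly. -/
noncomputable def weightD5 (m : Fin 5 → ℝ) : Fin 5 → ℝ := ∑ k, m k • ωD k

theorem cartanMatrix_D_five :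
    CartanMatrix.D 5 =
      !![2, -1, 0, 0, 0; -1, 2, -1, 0, 0; 0, -1, 2, -1, -1; 0, 0, -1, 2, 0; 0, 0, -1, 0, 2] := by
  decide

theorem e5_apply (i j : Fin 5) : e5 i j = if j = i then 1 else 0 :=
  Pi.single_apply i 1 j

theorem dot5_e5_sub_e5 (v : Fin 5 → ℝ) (i j : Fin 5) : dot5 v (e5 i - e5 j) = v i - v j := by
  change v ⬝ᵥ (Pi.single i 1 - Pi.single j 1) = v i - v j
  rw [dotProduct_sub, dotProduct_single_one, dotProduct_single_one]

theorem dot5_e5_add_e5 (v : Fin 5 → ℝ) (i j : Fin 5) : dot5 v (e5 i + e5 j) = v i + v j := by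
  change v ⬝ᵥ (Pi.single i 1 + Pi.single j 1) = v i + v j
  rw [dotProduct_add, dotProduct_single_one, dotProduct_single_one]

theorem dot5_simpleRootD5 (v : Fin 5 → ℝ) (k : Fin 5) :
    dot5 v (simpleRootD5 k) =
      ![v 0 - v 1, v 1 - v 2, v 2 - v 3, v 3 - v 4, v 3 + v 4] k := by
  fin_cases k
  exacts [dot5_e5_sub_e5 v 0 1, dot5_e5_sub_e5 v 1 2, dot5_e5_sub_e5 v 2 3,
    dot5_e5_sub_e5 v 3 4, dot5_e5_add_e5 v 3 4]

theorem dot5_ωD_simpleRootD5 (k j : Fin 5) :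
    dot5 (ωD k) (simpleRootD5 j) = if k = j then 1 else 0 := by
  rw [dot5_simpleRootD5]
  fin_cases k <;> fin_cases j <;>
    simp only [ωD, Pi.add_apply, Pi.sub_apply, Pi.smul_apply, smul_eq_mul, e5_apply,
      Fin.reduceFinMk, Fin.reduceEq, if_true, if_false, Matrix.cons_val] <;>
    norm_num

theorem dot5_simpleRootD5_simpleRootD5 (i j : Fin 5) :
    dot5 (simpleRootD5 i) (simpleRootD5 j) = CartanMatrix.D 5 i j := by
  rw [dot5_simpleRootD5, cartanMatrix_D_five]
  fin_cases i <;> fin_cases j <;>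
    simp only [simpleRootD5, Pi.add_apply, Pi.sub_apply, e5_apply, Fin.reduceFinMk,
      Fin.reduceEq, if_true, if_false, Matrix.of_apply, Matrix.cons_val] <;>
    norm_num

theorem dot5_weightD5_simpleRootD5 (m : Fin 5 → ℝ) (j : Fin 5) :
    dot5 (weightD5 m) (simpleRootD5 j) = m j := by
  calc dot5 (weightD5 m) (simpleRootD5 j)
      = ∑ k, m k * dot5 (ωD k) (simpleRootD5 j) := by
        change (∑ k, m k • ωD k) ⬝ᵥ simpleRootD5 j = ∑ k, m k * (ωD k ⬝ᵥ simpleRootD5 j)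
        simp only [sum_dotProduct, smul_dotProduct, smul_eq_mul]
    _ = m j := by simp [dot5_ωD_simpleRootD5]

theorem weightD5_dot5_simpleRootD5 (v : Fin 5 → ℝ) :
    weightD5 (fun k ↦ dot5 v (simpleRootD5 k)) = v := by
  ext i
  fin_cases i <;>
    simp only [weightD5, Fin.sum_univ_five, dot5_simpleRootD5, ωD, Pi.add_apply, Pi.sub_apply,
      Pi.smul_apply, smul_eq_mul, e5_apply, Fin.reduceFinMk, Fin.reduceEq, if_true, if_false,
      Matrix.cons_val] <;>
    ring

theorem simpleRootD5_eq_weightD5 (k : Fin 5) :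
    simpleRootD5 k = weightD5 (fun j ↦ (CartanMatrix.D 5 k j : ℝ)) := by
  simp only [← dot5_simpleRootD5_simpleRootD5, weightD5_dot5_simpleRootD5]

theorem refl5_of_dot5_self_eq_two {α : Fin 5 → ℝ} (hα : dot5 α α = 2) (v : Fin 5 → ℝ) :
    refl5 α v = v - dot5 v α • α := by
  rw [refl5, hα, mul_div_cancel_left₀ _ two_ne_zero]

theorem dot5_simpleRootD5_self (k : Fin 5) : dot5 (simpleRootD5 k) (simpleRootD5 k) = 2 := by
  rw [dot5_simpleRootD5_simpleRootD5, CartanMatrix.D_diag, Int.cast_ofNat]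

theorem refl5_simpleRootD5_weightD5 (k : Fin 5) (m : Fin 5 → ℝ) :
    refl5 (simpleRootD5 k) (weightD5 m) =
      weightD5 (fun j ↦ m j - m k * (CartanMatrix.D 5 k j : ℝ)) := by
  rw [refl5_of_dot5_self_eq_two (dot5_simpleRootD5_self k), dot5_weightD5_simpleRootD5,
    simpleRootD5_eq_weightD5]
  simp only [weightD5, Finset.smul_sum, smul_smul, sub_smul, Finset.sum_sub_distrib]

theorem strictAnti_of_dot5_simpleRootD5_pos {v : Fin 5 → ℝ}
    (hv : ∀ k, 0 < dot5 v (simpleRootD5 k)) : StrictAnti v := by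
  refine Fin.strictAnti_iff_succ_lt.2 fun i ↦ sub_pos.1 ?_
  rw [← dot5_e5_sub_e5]
  fin_cases i
  exacts [hv 0, hv 1, hv 2, hv 3]

theorem dot5_pos_of_mem_posRootsD5 {v α : Fin 5 → ℝ}
    (hv : ∀ k, 0 < dot5 v (simpleRootD5 k)) (hα : α ∈ posRootsD5) : 0 < dot5 v α := by
  have anti : StrictAnti v := strictAnti_of_dot5_simpleRootD5_pos hv
  obtain ⟨i, j, hij, rfl | rfl⟩ := hα
  · rw [dot5_e5_sub_e5]
    exact sub_pos.2 (anti hij)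
  · have hlast : 0 < v 3 + v 4 := dot5_e5_add_e5 v 3 4 ▸ hv 4
    have hi : v 3 ≤ v i := anti.antitone (by lia)
    have hj : v 4 ≤ v j := anti.antitone (Fin.le_last j)
    rw [dot5_e5_add_e5]
    exact hlast.trans_le (add_le_add hi hj)

theorem dot5_weightD5_pos {m α : Fin 5 → ℝ} (hm : ∀ k, 0 < m k) (hα : α ∈ posRootsD5) :
    0 < dot5 (weightD5 m) α :=
  dot5_pos_of_mem_posRootsD5 (fun k ↦ by rw [dot5_weightD5_simpleRootD5]; exact hm k) hα

theorem d5_reflection_regular_general {a b c : ℝ} (ha : -1 < a) (hb : -1 < b) (hc : 0 < c) :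
    refl5 (e5 3 - e5 4) (a • ωD 0 + b • ωD 1 + c • ωD 2 - (2 : ℝ) • ωD 3 + ρD) =
        a • ωD 0 + b • ωD 1 + (c - 1) • ωD 2 + ρD ∧
      ∀ α ∈ posRootsD5, 0 < dot5 (a • ωD 0 + b • ωD 1 + (c - 1) • ωD 2 + ρD) α := by
  have source : a • ωD 0 + b • ωD 1 + c • ωD 2 - (2 : ℝ) • ωD 3 + ρD =
      weightD5 ![a + 1, b + 1, c + 1, -1, 1] := by
    simp only [weightD5, Fin.sum_univ_five, ρD, Matrix.cons_val]
    module
  have target : a • ωD 0 + b • ωD 1 + (c - 1) • ωD 2 + ρD =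
      weightD5 ![a + 1, b + 1, c, 1, 1] := by
    simp only [weightD5, Fin.sum_univ_five, ρD, Matrix.cons_val]
    module
  have reflected (j : Fin 5) :
      ![a + 1, b + 1, c + 1, -1, 1] j - -1 * (CartanMatrix.D 5 3 j : ℝ) =
        ![a + 1, b + 1, c, 1, 1] j := by
    rw [cartanMatrix_D_five]
    fin_cases j <;> simp only [Fin.reduceFinMk, Matrix.of_apply, Matrix.cons_val] <;> norm_num
  have regular (k : Fin 5) : 0 < ![a + 1, b + 1, c, 1, 1] k := by
    fin_cases k <;> simp only [Fin.reduceFinMk, Matrix.cons_val] <;> linarith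
  rw [source, target]
  exact ⟨(refl5_simpleRootD5_weightD5 3 _).trans (congrArg weightD5 (funext reflected)),
    fun _ hα ↦ dot5_weightD5_pos regular hα⟩

/-- For nonnegative integers `a, b` and an integer `c ≥ 1`: reflecting the vector
`aω₁ + bω₂ + cω₃ − 2ω₄ + ρ` in the simple root `α₄ = e₄ − e₅` gives
`aω₁ + bω₂ + (c−1)ω₃ + ρ`, and the latter pairs strictly positively with every
positive root of `D₅`. -/
theorem d5_reflection_regular (a b : ℕ) (c : ℤ) (hc : 1 ≤ c) :
    refl5 (e5 3 - e5 4)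
        ((a : ℝ) • ωD 0 + (b : ℝ) • ωD 1 + (c : ℝ) • ωD 2 - (2 : ℝ) • ωD 3 + ρD)
      = (a : ℝ) • ωD 0 + (b : ℝ) • ωD 1 + ((c : ℝ) - 1) • ωD 2 + ρD ∧
    ∀ α ∈ posRootsD5,
      0 < dot5 ((a : ℝ) • ωD 0 + (b : ℝ) • ωD 1 + ((c : ℝ) - 1) • ωD 2 + ρD) α :=
  d5_reflection_regular_general (neg_one_lt_zero.trans_le a.cast_nonneg)
    (neg_one_lt_zero.trans_le b.cast_nonneg) (Int.cast_pos.2 hc)
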